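/- Let Q be a 2-connected finite multigraph with at least one edge, so that d_E := b(Q) − b(Q|_E) ≥ 1 for every proper nonempty subset E ⊊ Q₁. In the field ℚ(X) of rational functions, set H := Σ over all chains ∅ ⊊ E₁ ⊊ ⋯ ⊊ E_k ⊊ Q₁ of proper nonempty subsets of Q₁ (k ≥ 0, the empty chain contributing the term 1) of ∏_{j=1}^{k} X^{d_{E_j}}/(1 − X^{d_{E_j}}). Then there exist a polynomial N ∈ ℤ[X] with non-negative coefficients, an integer s ≥ 0 and integers e₁,…,e_s ≥ 1 such that H = N(X)/∏_{i=1}^{s}(1 − X^{e_i}). (H is the specialisation u_E = X^{d_E} of the fine Hilbert series of the Stanley–Reisner ring of the order complex of the poset of proper nonempty subsets of Q₁.) -/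

import Mathlib

/-- A finite quiver (equivalently, a finite multigraph with a chosen orientation of each
edge): finitely many vertices and arrows, with source and target maps. -/
structure FinQuiver where
  V : Type
  E : Type
  [fintypeV : Fintype V]
  [fintypeE : Fintype E]
  [decEqV : DecidableEq V]
  s : E → V
  t : E → V

attribute [instance] FinQuiver.fintypeV FinQuiver.fintypeE FinQuiver.decEqV

namespace FinQuiver

/-- The adjacency (simple) graph of the underlying multigraph: two vertices are adjacent
if some edge joins them.  Connectivity of the multigraph only depends on this graph. -/
def adjGraph (G : FinQuiver) : SimpleGraph G.V :=
  SimpleGraph.fromRel fun a b => ∃ e : G.E, G.s e = a ∧ G.t e = b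

/-- The number of connected components of the underlying multigraph. -/
noncomputable def c (G : FinQuiver) : ℕ :=
  Nat.card G.adjGraph.ConnectedComponent

/-- The Betti number `b(Q) = c(Q) - #Q₀ + #Q₁` of the underlying multigraph. -/
noncomputable def betti (G : FinQuiver) : ℤ :=
  (G.c : ℤ) - Fintype.card G.V + Fintype.card G.E

/-- The underlying multigraph is connected. -/
def Connected (G : FinQuiver) : Prop := G.adjGraph.Connected

/-- Deletion of the edge `e`. -/
noncomputable def deleteEdge (G : FinQuiver) (e : G.E) : FinQuiver :=
  letI : DecidableEq G.E := Classical.decEq _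
  { V := G.V, E := {e' : G.E // e' ≠ e}, s := fun e' => G.s e'.1, t := fun e' => G.t e'.1 }

/-- The underlying multigraph is 2-connected: it is connected and stays connected after
deleting any single edge. -/
def TwoConnected (G : FinQuiver) : Prop :=
  G.Connected ∧ ∀ e : G.E, (G.deleteEdge e).Connected

/-- Restriction `Q|_I` to a subset `I` of the vertices (full sub(multi)graph). -/
noncomputable def restrictV (G : FinQuiver) (I : Set G.V) : FinQuiver :=
  letI : DecidablePred (· ∈ I) := Classical.decPred _
  { V := ↥I
    E := {e : G.E // G.s e ∈ I ∧ G.t e ∈ I}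
    s := fun e => ⟨G.s e.1, e.2.1⟩
    t := fun e => ⟨G.t e.1, e.2.2⟩ }

/-- Restriction `Q|_J` to a subset `J` of the edges (keeping all vertices). -/
noncomputable def restrictE (G : FinQuiver) (J : Set G.E) : FinQuiver :=
  letI : DecidablePred (· ∈ J) := Classical.decPred _
  { V := G.V
    E := ↥J
    s := fun e => G.s e.1
    t := fun e => G.t e.1 }

end FinQuiver

/-- For a proper nonempty edge subset `E ⊊ Q₁`, the exponent `d_E := b(Q) − b(Q|_E)`. -/
noncomputable def dExp (G : FinQuiver) (E : Finset G.E) : ℤ :=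
  G.betti - (G.restrictE (↑E : Set G.E)).betti

open Classical in
/-- The specialisation `u_E = X^{d_E}` of the fine Hilbert series of the Stanley–Reisner
ring of the order complex of the poset of proper nonempty subsets of `Q₁`: the sum over
all chains `∅ ⊊ E₁ ⊊ ⋯ ⊊ E_k ⊊ Q₁` of proper nonempty subsets of `Q₁` (a chain being
encoded by its underlying finite set of subsets; `k ≥ 0`, the empty chain contributing
the term `1`) of `∏_{j=1}^{k} X^{d_{E_j}}/(1 − X^{d_{E_j}})`, inside `ℚ(X)`. -/
noncomputable def hilbertChainSum (G : FinQuiver) : RatFunc ℚ :=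
  ∑ C ∈ Finset.univ.filter (fun C : Finset (Finset G.E) =>
      (∀ E ∈ C, E.Nonempty ∧ E ≠ Finset.univ) ∧
      IsChain (· ⊆ ·) (↑C : Set (Finset G.E))),
    ∏ E ∈ C, (RatFunc.X ^ (dExp G E)) / (1 - RatFunc.X ^ (dExp G E))

/-!
Adding an edge lowers the number of connected components by at most one, so `E ↦ b(Q|_E)` is
monotone; deleting a non-bridge lowers `b` by exactly one, whence `d_E ≥ 1` for every proper `E`.

For the positivity, let `w_S = X^{d_S} / (1 - X^{d_S})`, let `f(S)` be the sum of the chain terms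
over the chains with top element `S`, and put `f(∅) = 1`, so that `f(S) = w_S ∑_{T ⊊ S} f(T)` and
`H = ∑_{T ⊊ Q₁} f(T)`. The interval sums `F(B, S) = ∑_{B ⊆ T ⊆ S} f(T)` satisfy
`F(B, S) = F(B ∪ {a}, S) + F(B, S ∖ {a})`. Moving up from `B` to `S`, and from `∅` to `B`, one
element at a time, both `F(B, S) - f(S)` and `F(∅, S) - F(B, S)` become sums of interval sums with
top `S ∖ {a}`. Since `F(B, S) = (1 + w_S) (F(B, S) - f(S)) + w_S (F(∅, S) - F(B, S))`, each element
of `S` costs one factor `w_S = X^{d_S} / (1 - X^{d_S})` or `1 + w_S = 1 / (1 - X^{d_S})`, and both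
have a non-negative numerator over `1 - X^L` as soon as `d_S ∣ L`. Applied to `S = Q₁`, the same
telescoping expresses `H = F(∅, Q₁) - f(Q₁)` through interval sums with top `Q₁ ∖ {a}`.
-/

section GraphComponents

variable {V : Type*} {K : SimpleGraph V} {u v a b : V}

theorem reachable_or_of_reachable_sup_edge (h : (K ⊔ .edge u v).Reachable a b) :
    K.Reachable a b ∨
      (K.Reachable a u ∨ K.Reachable a v) ∧ (K.Reachable b u ∨ K.Reachable b v) := by
  obtain ⟨p⟩ := h
  induction p with
  | nil => exact .inl .rfl
  | @cons x y z hxy _ ih =>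
    rcases hxy with hK | hedge
    · have hx : K.Reachable x y := hK.reachable
      exact ih.imp hx.trans (.imp_left (.imp hx.trans hx.trans))
    · have hz : K.Reachable z u ∨ K.Reachable z v := by
        rcases (SimpleGraph.edge_adj ..).1 hedge |>.1 with ⟨rfl, rfl⟩ | ⟨rfl, rfl⟩
        · exact ih.elim (fun h => .inr h.symm) (·.2)
        · exact ih.elim (fun h => .inl h.symm) (·.2)
      rcases (SimpleGraph.edge_adj ..).1 hedge |>.1 with ⟨rfl, rfl⟩ | ⟨rfl, rfl⟩
      · exact .inr ⟨.inl .rfl, hz⟩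
      · exact .inr ⟨.inr .rfl, hz⟩

theorem card_connectedComponent_le_sup_edge_add_one [Finite V] (K : SimpleGraph V) (u v : V) :
    Nat.card K.ConnectedComponent ≤ Nat.card (K ⊔ .edge u v).ConnectedComponent + 1 := by
  let merge : K.ConnectedComponent → (K ⊔ .edge u v).ConnectedComponent :=
    SimpleGraph.ConnectedComponent.map (.ofLE le_sup_left)
  have merge_injOn : Set.InjOn merge {K.connectedComponentMk u}ᶜ := by
    intro x hx y hy hxy
    induction x using SimpleGraph.ConnectedComponent.ind with | _ a
    induction y using SimpleGraph.ConnectedComponent.ind with | _ b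
    have ha : ¬ K.Reachable a u := fun h => hx (SimpleGraph.ConnectedComponent.sound h)
    have hb : ¬ K.Reachable b u := fun h => hy (SimpleGraph.ConnectedComponent.sound h)
    refine SimpleGraph.ConnectedComponent.sound ?_
    rcases reachable_or_of_reachable_sup_edge (SimpleGraph.ConnectedComponent.exact hxy) with
      hab | ⟨hau | hav, hbu | hbv⟩
    · exact hab
    · exact absurd hau ha
    · exact absurd hau ha
    · exact absurd hbu hb
    · exact hav.trans hbv.symm
  have : Finite K.ConnectedComponent := Quot.finite _
  have : Finite (K ⊔ .edge u v).ConnectedComponent := Quot.finite _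
  calc Nat.card K.ConnectedComponent
      = 1 + ({K.connectedComponentMk u}ᶜ : Set K.ConnectedComponent).ncard := by
        rw [← Set.ncard_add_ncard_compl {K.connectedComponentMk u}, Set.ncard_singleton]
    _ ≤ 1 + (Set.univ : Set (K ⊔ .edge u v).ConnectedComponent).ncard := by
        gcongr
        exact Set.ncard_le_ncard_of_injOn merge (fun _ _ => Set.mem_univ _) merge_injOn
    _ = Nat.card (K ⊔ .edge u v).ConnectedComponent + 1 := by
        rw [Set.ncard_univ, add_comm]

end GraphComponents

namespace FinQuiver

variable (G : FinQuiver)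

/-- The multigraph has no bridge: deleting an edge never changes the number of connected
components. No connectedness is required. -/
def Bridgeless : Prop := ∀ e : G.E, (G.deleteEdge e).c = G.c

variable {G}

theorem Connected.c_eq_one (h : G.Connected) : G.c = 1 := by
  have := h.nonempty
  have := h.preconnected.subsingleton_connectedComponent
  exact Nat.card_unique

theorem TwoConnected.bridgeless (h : G.TwoConnected) : G.Bridgeless := fun e =>
  (h.2 e).c_eq_one.trans h.1.c_eq_one.symm

variable (G)

/-- The graph on the vertices of `G` joining the end points of the edges in `J`. It agrees with
`(G.restrictE J).adjGraph`, but its vertex type is syntactically `G.V` for every `J`, so that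
different edge sets can be compared. -/
def edgeGraph (J : Set G.E) : SimpleGraph G.V :=
  SimpleGraph.fromRel fun a b => ∃ e ∈ J, G.s e = a ∧ G.t e = b

theorem c_restrictE (J : Set G.E) :
    (G.restrictE J).c = Nat.card (G.edgeGraph J).ConnectedComponent := by
  have h : (G.restrictE J).adjGraph = G.edgeGraph J :=
    congrArg SimpleGraph.fromRel <| funext₂ fun _ _ => propext
      ⟨fun ⟨e, he⟩ => ⟨e.1, e.2, he⟩, fun ⟨e, heJ, he⟩ => ⟨⟨e, heJ⟩, he⟩⟩
  exact congrArg (fun K : SimpleGraph G.V => Nat.card K.ConnectedComponent) h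

theorem edgeGraph_insert (J : Set G.E) (e : G.E) :
    G.edgeGraph (insert e J) = G.edgeGraph J ⊔ .edge (G.s e) (G.t e) := by
  ext a b
  simp only [edgeGraph, SimpleGraph.fromRel_adj, SimpleGraph.sup_adj, SimpleGraph.edge_adj,
    Set.exists_mem_insert]
  grind

theorem betti_restrictE (E : Finset G.E) :
    (G.restrictE (E : Set G.E)).betti =
      (G.restrictE (E : Set G.E)).c - Fintype.card G.V + E.card := by
  have hV : Fintype.card (G.restrictE (E : Set G.E)).V = Fintype.card G.V := rfl
  have hE : Fintype.card (G.restrictE (E : Set G.E)).E = E.card := by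
    rw [← Nat.card_eq_fintype_card]
    exact Nat.card_eq_finsetCard E
  rw [betti, hV, hE]

theorem monotone_betti_restrictE :
    Monotone fun E : Finset G.E => (G.restrictE (E : Set G.E)).betti := by
  classical
  refine Finset.monotone_iff_forall_le_insert.2 fun E e he => ?_
  have hc : (G.restrictE (E : Set G.E)).c ≤ (G.restrictE (insert e E : Set G.E)).c + 1 := by
    rw [c_restrictE, c_restrictE, edgeGraph_insert]
    exact card_connectedComponent_le_sup_edge_add_one _ _ _
  rw [← Finset.coe_insert] at hc
  simp only [betti_restrictE, Finset.card_insert_of_notMem he]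
  lia

variable {G}

theorem Bridgeless.betti_restrictE_compl_singleton [DecidableEq G.E] (h : G.Bridgeless) (e : G.E) :
    (G.restrictE (({e}ᶜ : Finset G.E) : Set G.E)).betti = G.betti - 1 := by
  have hc : (G.restrictE (({e}ᶜ : Finset G.E) : Set G.E)).c = G.c := by
    rw [Finset.coe_compl, Finset.coe_singleton]
    exact h e
  have hcard : ({e}ᶜ : Finset G.E).card + 1 = Fintype.card G.E := by
    rw [← Finset.card_singleton e, Finset.card_compl_add_card]
  rw [betti_restrictE, betti, hc]
  lia

theorem Bridgeless.one_le_dExp (h : G.Bridgeless) {E : Finset G.E} (hE : E ≠ Finset.univ) :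
    1 ≤ dExp G E := by
  classical
  obtain ⟨e, he⟩ : ∃ e, e ∉ E := by simpa [Finset.eq_univ_iff_forall] using hE
  have hle : (G.restrictE (E : Set G.E)).betti ≤ G.betti - 1 :=
    h.betti_restrictE_compl_singleton e ▸
      G.monotone_betti_restrictE (Finset.subset_compl_singleton.2 he)
  unfold dExp
  lia

end FinQuiver

section ChainSum

variable {P R : Type*}

open Classical in
/-- The finite chains, including the empty one, contained in the finite set `s`. -/
noncomputable def chainsIn [LE P] (s : Finset P) : Finset (Finset P) :=
  {C ∈ s.powerset | IsChain (· ≤ ·) (C : Set P)}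

theorem mem_chainsIn [LE P] {s C : Finset P} :
    C ∈ chainsIn s ↔ C ⊆ s ∧ IsChain (· ≤ ·) (C : Set P) := by
  simp only [chainsIn, Finset.mem_filter, Finset.mem_powerset]

/-- The sum over the chains `C` in `s` of the products of the weights of their elements: the
generating function of the order complex of `s`. -/
noncomputable def chainSum [LE P] [CommSemiring R] (w : P → R) (s : Finset P) : R :=
  ∑ C ∈ chainsIn s, ∏ x ∈ C, w x

theorem chainSum_congr [LE P] [CommSemiring R] {w w' : P → R} {s : Finset P}
    (h : ∀ x ∈ s, w x = w' x) : chainSum w s = chainSum w' s :=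
  Finset.sum_congr rfl fun _ hC =>
    Finset.prod_congr rfl fun x hx => h x ((mem_chainsIn.1 hC).1 hx)

theorem exists_isGreatest_of_isChain [Preorder P] {C : Finset P}
    (hC : IsChain (· ≤ ·) (C : Set P)) (hne : C.Nonempty) :
    ∃ x, IsGreatest (C : Set P) x := by
  obtain ⟨x, hx⟩ := C.exists_maximal hne
  exact ⟨x, hx.1, fun y hy => (hC.total hy hx.1).elim id fun hxy => hx.2 hy hxy⟩

variable [PartialOrder P] [LocallyFiniteOrder P]

theorem isGreatest_insert_of_mem_chainsIn_Ioo [DecidableEq P] {a x : P} {C : Finset P}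
    (hC : C ∈ chainsIn (Finset.Ioo a x)) : IsGreatest (insert x C : Finset P) x := by
  refine ⟨Finset.mem_insert_self x C, fun y hy => ?_⟩
  rcases Finset.mem_insert.1 hy with rfl | hyC
  · exact le_rfl
  · exact (Finset.mem_Ioo.1 ((mem_chainsIn.1 hC).1 hyC)).2.le

theorem insert_mem_chainsIn_Ioo [DecidableEq P] {a b x : P} {C : Finset P}
    (hx : x ∈ Finset.Ioo a b) (hC : C ∈ chainsIn (Finset.Ioo a x)) :
    insert x C ∈ chainsIn (Finset.Ioo a b) := by
  have hCx := (mem_chainsIn.1 hC).1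
  refine mem_chainsIn.2 ⟨Finset.insert_subset hx ?_, ?_⟩
  · exact hCx.trans (Finset.Ioo_subset_Ioo_right (Finset.mem_Ioo.1 hx).2.le)
  · rw [Finset.coe_insert]
    exact (mem_chainsIn.1 hC).2.insert fun y hy _ => .inr (Finset.mem_Ioo.1 (hCx hy)).2.le

theorem erase_mem_chainsIn_Ioo [DecidableEq P] {a b x : P} {C : Finset P}
    (hC : C ∈ chainsIn (Finset.Ioo a b)) (hx : IsGreatest (C : Set P) x) :
    C.erase x ∈ chainsIn (Finset.Ioo a x) := by
  obtain ⟨hCs, hchain⟩ := mem_chainsIn.1 hC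
  refine mem_chainsIn.2 ⟨fun y hy => ?_, hchain.mono (Finset.coe_subset.2 (C.erase_subset x))⟩
  obtain ⟨hyx, hyC⟩ := Finset.mem_erase.1 hy
  exact Finset.mem_Ioo.2 ⟨(Finset.mem_Ioo.1 (hCs hyC)).1, (hx.2 hyC).lt_of_ne hyx⟩

theorem chainSum_Ioo [CommSemiring R] (w : P → R) (a b : P) :
    chainSum w (Finset.Ioo a b) =
      1 + ∑ x ∈ Finset.Ioo a b, w x * chainSum w (Finset.Ioo a x) := by
  classical
  have empty_mem : ∅ ∈ chainsIn (Finset.Ioo a b) :=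
    mem_chainsIn.2 ⟨Finset.empty_subset _, by simp⟩
  have notMem : ∀ x, ∀ C ∈ chainsIn (Finset.Ioo a x), x ∉ C := fun x C hC hx =>
    (Finset.mem_Ioo.1 ((mem_chainsIn.1 hC).1 hx)).2.false
  simp_rw [chainSum, Finset.mul_sum]
  rw [← Finset.add_sum_erase _ _ empty_mem, Finset.prod_empty, Finset.sum_sigma']
  congr 1
  refine (Finset.sum_nbij (fun p => insert p.1 p.2) ?_ ?_ ?_ ?_).symm
  · rintro ⟨x, C⟩ hp
    obtain ⟨hx, hC⟩ := Finset.mem_sigma.1 hp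
    exact Finset.mem_erase.2 ⟨Finset.insert_ne_empty x C, insert_mem_chainsIn_Ioo hx hC⟩
  · rintro ⟨x, C⟩ hp ⟨y, D⟩ hq (h : insert x C = insert y D)
    obtain ⟨-, hC⟩ := Finset.mem_sigma.1 hp
    obtain ⟨-, hD⟩ := Finset.mem_sigma.1 hq
    obtain rfl : x = y := (isGreatest_insert_of_mem_chainsIn_Ioo hC).unique
      (h ▸ isGreatest_insert_of_mem_chainsIn_Ioo hD)
    rw [← Finset.erase_insert (notMem x C hC), h, Finset.erase_insert (notMem x D hD)]
  · intro C hC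
    obtain ⟨hne, hC⟩ := Finset.mem_erase.1 hC
    obtain ⟨x, hx⟩ :=
      exists_isGreatest_of_isChain (mem_chainsIn.1 hC).2 (Finset.nonempty_iff_ne_empty.2 hne)
    exact ⟨⟨x, C.erase x⟩, Finset.mem_sigma.2 ⟨(mem_chainsIn.1 hC).1 hx.1,
      erase_mem_chainsIn_Ioo hC hx⟩, Finset.insert_erase hx.1⟩
  · rintro ⟨x, C⟩ hp
    exact (Finset.prod_insert (notMem x C (Finset.mem_sigma.1 hp).2)).symm

end ChainSum

section BooleanIntervals

variable {α R : Type*} [DecidableEq α]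

theorem sum_Icc_eq_sum_insert_add_sum_erase [AddCommMonoid R] (f : Finset α → R) (B S : Finset α)
    (a : α) :
    ∑ T ∈ Finset.Icc B S, f T =
      ∑ T ∈ Finset.Icc (insert a B) S, f T + ∑ T ∈ Finset.Icc B (S.erase a), f T := by
  rw [← Finset.sum_filter_add_sum_filter_not (Finset.Icc B S) (a ∈ ·)]
  congr 2
  · ext T
    simp only [Finset.mem_filter, Finset.mem_Icc, Finset.insert_subset_iff]
    tauto
  · ext T
    simp only [Finset.mem_filter, Finset.mem_Icc, Finset.subset_erase]
    tauto

theorem sum_Icc_sub_sum_Icc_mem [AddCommGroup R] {M : AddSubmonoid R} {f : Finset α → R}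
    {S B B' : Finset α} (hM : ∀ a ∈ S, ∀ B, ∑ T ∈ Finset.Icc B (S.erase a), f T ∈ M)
    (hB'B : B' ⊆ B) (hBS : B ⊆ S) :
    ∑ T ∈ Finset.Icc B' S, f T - ∑ T ∈ Finset.Icc B S, f T ∈ M := by
  obtain ⟨D, rfl⟩ : ∃ D, B = D ∪ B' := ⟨B, (Finset.union_eq_left.2 hB'B).symm⟩
  clear hB'B
  induction D using Finset.induction with
  | empty => simp
  | insert a D _ ih =>
    rw [Finset.insert_union] at hBS ⊢
    obtain ⟨haS, hDS⟩ := Finset.insert_subset_iff.1 hBS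
    have split := sum_Icc_eq_sum_insert_add_sum_erase f (D ∪ B') S a
    rw [← sub_eq_iff_eq_add'] at split
    rw [← sub_add_sub_cancel _ (∑ T ∈ Finset.Icc (D ∪ B') S, f T), split]
    exact add_mem (ih hDS) (hM a haS _)

theorem sum_Icc_empty_eq_add_sum_Ico [AddCommMonoid R] (f : Finset α → R) (S : Finset α) :
    ∑ T ∈ Finset.Icc ∅ S, f T = f S + ∑ T ∈ Finset.Ico ∅ S, f T := by
  rw [← Finset.Ico_insert_right (Finset.empty_subset S), Finset.sum_insert Finset.right_notMem_Ico]

variable [CommRing R] {A : ℕ → AddSubmonoid R} [SetLike.GradedMonoid A]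
  {w f : Finset α → R} {U : Finset α}

theorem sum_Icc_mem_graded (hf_empty : f ∅ = 1)
    (hf : ∀ S ∈ Finset.Ioo ∅ U, f S = w S * ∑ T ∈ Finset.Ico ∅ S, f T)
    (hw : ∀ S ∈ Finset.Ioo ∅ U, w S ∈ A 1) (hw' : ∀ S ∈ Finset.Ioo ∅ U, 1 + w S ∈ A 1)
    {S : Finset α} (hSU : S ⊂ U) (B : Finset α) :
    ∑ T ∈ Finset.Icc B S, f T ∈ A S.card := by
  induction S using Finset.strongInduction generalizing B with | H S ih
  by_cases hBS : B ⊆ S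
  swap
  · rw [Finset.Icc_eq_empty hBS, Finset.sum_empty]
    exact zero_mem _
  rcases S.eq_empty_or_nonempty with rfl | hne
  · rw [Finset.subset_empty.1 hBS, Finset.Icc_self, Finset.sum_singleton, hf_empty]
    exact SetLike.GradedOne.one_mem
  have hS : S ∈ Finset.Ioo ∅ U := Finset.mem_Ioo.2 ⟨hne.empty_ssubset, hSU⟩
  have lower_mem : ∀ a ∈ S, ∀ B, ∑ T ∈ Finset.Icc B (S.erase a), f T ∈ A (S.card - 1) := by
    intro a ha B
    rw [← Finset.card_erase_of_mem ha]
    exact ih _ (Finset.erase_ssubset ha) ((Finset.erase_subset a S).trans_ssubset hSU) B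
  have above : ∑ T ∈ Finset.Icc B S, f T - f S ∈ A (S.card - 1) := by
    simpa only [Finset.Icc_self, Finset.sum_singleton] using
      sum_Icc_sub_sum_Icc_mem lower_mem hBS subset_rfl
  have below : ∑ T ∈ Finset.Icc ∅ S, f T - ∑ T ∈ Finset.Icc B S, f T ∈ A (S.card - 1) :=
    sum_Icc_sub_sum_Icc_mem lower_mem (Finset.empty_subset B) hBS
  have total : ∑ T ∈ Finset.Icc ∅ S, f T = f S + ∑ T ∈ Finset.Ico ∅ S, f T :=
    sum_Icc_empty_eq_add_sum_Ico f S
  have key : ∑ T ∈ Finset.Icc B S, f T =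
      (1 + w S) * (∑ T ∈ Finset.Icc B S, f T - f S) +
        w S * (∑ T ∈ Finset.Icc ∅ S, f T - ∑ T ∈ Finset.Icc B S, f T) := by
    linear_combination hf S hS - w S * total
  rw [key, ← Nat.add_sub_cancel' hne.card_pos]
  exact add_mem (SetLike.GradedMul.mul_mem (hw' S hS) above)
    (SetLike.GradedMul.mul_mem (hw S hS) below)

theorem sum_Ico_mem_graded (hf_empty : f ∅ = 1)
    (hf : ∀ S ∈ Finset.Ioo ∅ U, f S = w S * ∑ T ∈ Finset.Ico ∅ S, f T)
    (hw : ∀ S ∈ Finset.Ioo ∅ U, w S ∈ A 1) (hw' : ∀ S ∈ Finset.Ioo ∅ U, 1 + w S ∈ A 1) :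
    ∑ T ∈ Finset.Ico ∅ U, f T ∈ A (U.card - 1) := by
  have total := sum_Icc_empty_eq_add_sum_Ico f U
  rw [← sub_eq_iff_eq_add'] at total
  rw [← total, ← Finset.sum_singleton f U, ← Finset.Icc_self U]
  refine sum_Icc_sub_sum_Icc_mem (fun a ha B => ?_) (Finset.empty_subset U) subset_rfl
  rw [← Finset.card_erase_of_mem ha]
  exact sum_Icc_mem_graded hf_empty hf hw hw' (Finset.erase_ssubset ha) B

theorem chainSum_Ioo_empty_mem_graded
    (hw : ∀ S ∈ Finset.Ioo ∅ U, w S ∈ A 1) (hw' : ∀ S ∈ Finset.Ioo ∅ U, 1 + w S ∈ A 1) :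
    chainSum w (Finset.Ioo ∅ U) ∈ A (U.card - 1) := by
  rcases U.eq_empty_or_nonempty with rfl | hU
  · rw [chainSum_Ioo, Finset.Ioo_self, Finset.sum_empty, add_zero]
    exact SetLike.GradedOne.one_mem (A := A)
  let f : Finset α → R := fun T => if T = ∅ then 1 else w T * chainSum w (Finset.Ioo ∅ T)
  have chainSum_eq : ∀ S : Finset α, S.Nonempty →
      chainSum w (Finset.Ioo ∅ S) = ∑ T ∈ Finset.Ico ∅ S, f T := by
    intro S hS
    rw [← Finset.Ioo_insert_left hS.empty_ssubset, Finset.sum_insert Finset.left_notMem_Ioo,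
      chainSum_Ioo]
    refine congrArg₂ _ (if_pos rfl).symm (Finset.sum_congr rfl fun T hT => ?_)
    exact (if_neg (Finset.mem_Ioo.1 hT).1.ne').symm
  rw [chainSum_eq U hU]
  refine sum_Ico_mem_graded (if_pos rfl) (fun S hS => ?_) hw hw'
  have hne : S.Nonempty := Finset.empty_ssubset.1 (Finset.mem_Ioo.1 hS).1
  rw [← chainSum_eq S hne]
  exact if_neg hne.ne_empty

end BooleanIntervals

section NatFractions

variable {F : Type*} [Field F] (x : F) (L : ℕ)

/-- The elements `N(x) / (1 - x ^ L) ^ k` of a field, for `N` a polynomial with natural number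
coefficients: the values at `x` of rational functions of the shape sought, graded by the number `k`
of factors in the denominator. -/
def natFractions (k : ℕ) : AddSubmonoid F where
  carrier := {r | ∃ N : Polynomial ℕ, r = N.eval₂ (Nat.castRingHom F) x / (1 - x ^ L) ^ k}
  zero_mem' := ⟨0, by rw [Polynomial.eval₂_zero, zero_div]⟩
  add_mem' := by
    rintro _ _ ⟨N, rfl⟩ ⟨N', rfl⟩
    exact ⟨N + N', by rw [Polynomial.eval₂_add, add_div]⟩

instance : SetLike.GradedMonoid (natFractions x L) where
  one_mem := ⟨1, by rw [Polynomial.eval₂_one, pow_zero, div_one]⟩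
  mul_mem := by
    rintro k l _ _ ⟨N, rfl⟩ ⟨N', rfl⟩
    exact ⟨N * N', by rw [Polynomial.eval₂_mul, pow_add, div_mul_div_comm]⟩

theorem one_sub_pow_dvd_one_sub_pow {R : Type*} [CommRing R] (x : R) {d L : ℕ} (hd : d ∣ L) :
    1 - x ^ d ∣ 1 - x ^ L := by
  obtain ⟨m, rfl⟩ := hd
  simpa only [one_pow, pow_mul] using sub_dvd_pow_sub_pow 1 (x ^ d) m

variable {x L} {d : ℕ}

theorem pow_div_one_sub_pow_mem_natFractions (hL : 1 - x ^ L ≠ 0) (hd : d ∣ L) (n : ℕ) :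
    x ^ n / (1 - x ^ d) ∈ natFractions x L 1 := by
  obtain ⟨m, rfl⟩ := hd
  have geom : 1 - x ^ (d * m) = (∑ i ∈ Finset.range m, (x ^ d) ^ i) * (1 - x ^ d) := by
    rw [geom_sum_mul_neg, pow_mul]
  refine ⟨Polynomial.X ^ n * ∑ i ∈ Finset.range m, (Polynomial.X ^ d) ^ i, ?_⟩
  simp only [Polynomial.eval₂_mul, Polynomial.eval₂_finsetSum, Polynomial.eval₂_pow,
    Polynomial.eval₂_X, pow_one]
  rw [geom] at hL ⊢
  rw [mul_comm (∑ i ∈ Finset.range m, (x ^ d) ^ i) (1 - x ^ d),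
    mul_div_mul_right _ _ (left_ne_zero_of_mul hL)]

theorem chainSum_mem_natFractions {α : Type*} [DecidableEq α] {U : Finset α} {d : Finset α → ℕ}
    (hL : 1 - x ^ L ≠ 0) (hd : ∀ S ∈ Finset.Ioo ∅ U, d S ∣ L) :
    chainSum (fun S => x ^ d S / (1 - x ^ d S)) (Finset.Ioo ∅ U) ∈
      natFractions x L (U.card - 1) := by
  refine chainSum_Ioo_empty_mem_graded
    (fun S hS => pow_div_one_sub_pow_mem_natFractions hL (hd S hS) _) fun S hS => ?_
  have hdS : 1 - x ^ d S ≠ 0 :=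
    ne_zero_of_dvd_ne_zero hL (one_sub_pow_dvd_one_sub_pow x (hd S hS))
  rw [one_add_div hdS, sub_add_cancel]
  simpa only [pow_zero] using pow_div_one_sub_pow_mem_natFractions hL (hd S hS) 0

theorem exists_chainSum_mem_natFractions {α : Type*} [DecidableEq α] {U : Finset α}
    {d : Finset α → ℕ} (hx : ∀ n ≠ 0, 1 - x ^ n ≠ 0) (hd : ∀ S ∈ Finset.Ioo ∅ U, d S ≠ 0) :
    ∃ L ≠ 0, chainSum (fun S => x ^ d S / (1 - x ^ d S)) (Finset.Ioo ∅ U) ∈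
      natFractions x L (U.card - 1) := by
  have hL : ∏ S ∈ Finset.Ioo ∅ U, d S ≠ 0 := Finset.prod_ne_zero_iff.2 hd
  exact ⟨_, hL, chainSum_mem_natFractions (hx _ hL) fun S hS => Finset.dvd_prod_of_mem d hS⟩

end NatFractions

section RatFunc

variable {K : Type*} [Field K]

theorem ratFunc_one_sub_X_pow_ne_zero {n : ℕ} (hn : n ≠ 0) :
    (1 - RatFunc.X ^ n : RatFunc K) ≠ 0 := by
  have h : (Polynomial.X ^ n - Polynomial.C 1 : Polynomial K) ≠ 0 :=
    Polynomial.X_pow_sub_C_ne_zero (Nat.pos_of_ne_zero hn) 1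
  rw [← neg_ne_zero, neg_sub]
  simpa using RatFunc.algebraMap_ne_zero h

theorem ratFunc_algebraMap_map_natCast (N : Polynomial ℕ) :
    algebraMap (Polynomial K) (RatFunc K) (N.map (Nat.castRingHom K)) =
      N.eval₂ (Nat.castRingHom (RatFunc K)) RatFunc.X := by
  rw [← RatFunc.aeval_X_left_eq_algebraMap, Polynomial.aeval_def, Polynomial.eval₂_map]
  exact congrArg (N.eval₂ · RatFunc.X) (Subsingleton.elim _ _)

end RatFunc

theorem hilbertChainSum_eq_chainSum (G : FinQuiver) [DecidableEq G.E] :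
    hilbertChainSum G =
      chainSum (fun E => RatFunc.X ^ dExp G E / (1 - RatFunc.X ^ dExp G E))
        (Finset.Ioo ∅ (Finset.univ : Finset G.E)) := by
  refine Finset.sum_congr ?_ fun _ _ => rfl
  ext C
  simp [mem_chainsIn, Finset.subset_iff, Finset.ssubset_univ_iff]

theorem hilbert_series_positivity_general (G : FinQuiver) (h : G.Bridgeless) :
    (∀ E : Finset G.E, E.Nonempty → E ≠ Finset.univ → 1 ≤ dExp G E) ∧
    ∃ (N : Polynomial ℤ) (s : ℕ) (e : Fin s → ℕ),
      (∀ n : ℕ, 0 ≤ N.coeff n) ∧ (∀ i : Fin s, 1 ≤ e i) ∧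
      hilbertChainSum G
        = algebraMap (Polynomial ℚ) (RatFunc ℚ) (N.map (Int.castRingHom ℚ))
          / ∏ i : Fin s, (1 - RatFunc.X ^ (e i)) := by
  classical
  refine ⟨fun E _ hE => h.one_le_dExp hE, ?_⟩
  have dExp_pos : ∀ E ∈ Finset.Ioo ∅ (Finset.univ : Finset G.E), 1 ≤ dExp G E := fun E hE =>
    h.one_le_dExp (Finset.mem_Ioo.1 hE).2.ne
  obtain ⟨L, hL, N, hN⟩ := exists_chainSum_mem_natFractions (U := (Finset.univ : Finset G.E))
    (d := fun E => (dExp G E).toNat) (fun _ => ratFunc_one_sub_X_pow_ne_zero (K := ℚ))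
    fun E hE => by have := dExp_pos E hE; lia
  refine ⟨N.map (Nat.castRingHom ℤ), Fintype.card G.E - 1, fun _ => L, fun n => ?_,
    fun _ => Nat.one_le_iff_ne_zero.2 hL, ?_⟩
  · rw [Polynomial.coeff_map]
    exact Int.natCast_nonneg _
  · have hcast : (Int.castRingHom ℚ).comp (Nat.castRingHom ℤ) = Nat.castRingHom ℚ :=
      Subsingleton.elim _ _
    rw [Polynomial.map_map, hcast, ratFunc_algebraMap_map_natCast, Finset.prod_const,
      Finset.card_univ, Fintype.card_fin, ← Finset.card_univ, ← hN, hilbertChainSum_eq_chainSum]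
    refine chainSum_congr fun E hE => ?_
    have h_nat : ((dExp G E).toNat : ℤ) = dExp G E :=
      Int.toNat_of_nonneg (zero_le_one.trans (dExp_pos E hE))
    rw [← h_nat, zpow_natCast, Int.toNat_natCast]

/-- Let `Q` be a 2-connected finite multigraph with at least one edge, so
that `d_E := b(Q) − b(Q|_E) ≥ 1` for every proper nonempty subset `E ⊊ Q₁`.  Then the
rational function `H = hilbertChainSum Q ∈ ℚ(X)` can be written as
`N(X)/∏_{i=1}^{s}(1 − X^{e_i})` where `N ∈ ℤ[X]` has non-negative coefficients, `s ≥ 0`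
and `e₁, …, e_s ≥ 1` are integers. -/
theorem hilbert_series_positivity (G : FinQuiver) (hE : Nonempty G.E)
    (h2 : G.TwoConnected) :
    (∀ E : Finset G.E, E.Nonempty → E ≠ Finset.univ → 1 ≤ dExp G E) ∧
    ∃ (N : Polynomial ℤ) (s : ℕ) (e : Fin s → ℕ),
      (∀ n : ℕ, 0 ≤ N.coeff n) ∧ (∀ i : Fin s, 1 ≤ e i) ∧
      hilbertChainSum G
        = algebraMap (Polynomial ℚ) (RatFunc ℚ) (N.map (Int.castRingHom ℚ))
          / ∏ i : Fin s, (1 - RatFunc.X ^ (e i)) :=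
  hilbert_series_positivity_general G h2.bridgeless
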